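/- arXiv:1812.09564 — 4 statements merged into one kernel-verified Lean document; each statement's English description precedes it below -/
import Mathlib

section
/- Every multiplicative sublattice of co-rank k in ℤ^{n+k} is of the form g(L), where g : ℤ^n → ℤ^{n+k} is an acceptable map and L is a multiplicative sublattice of full rank n in ℤ^n. -/
/-- A sublattice of `ℤ^m` is multiplicative if it is closed under componentwise
multiplication. -/
def IsMulClosed {m : ℕ} (L : Submodule ℤ (Fin m → ℤ)) : Prop :=
  ∀ u ∈ L, ∀ v ∈ L, u * v ∈ L

/-- An acceptable map `ℤ^n → ℤ^{n+k}` is an injective map each of whose output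
coordinates is either one of the input coordinates or identically `0`. -/
def IsAcceptable {n k : ℕ} (g : (Fin n → ℤ) → (Fin (n + k) → ℤ)) : Prop :=
  Function.Injective g ∧
    ∀ j : Fin (n + k), (∃ i : Fin n, ∀ x, g x j = x i) ∨ ∀ x, g x j = 0

/-!
The coordinates of `ℤ^{n+k}` restrict to characters of the non-unital algebra `L'`. By Dedekind's
independence of characters, `L'` has at most `rank L' = n` nonzero characters: pass to the
unitization, where the zero character becomes one more character and the rank goes up by one, and
then extend scalars to the fraction field. On the other hand an element of `L'` is determined by its
distinct nonzero coordinates, so there are at least `n` of these, hence exactly `n`. Keeping each of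
them once embeds `L'` in `ℤ^n`, and the acceptable map repeats them where they occur in `L'`.
-/

open Cardinal Module TensorProduct

universe u v w

theorem rank_prod_of_isDomain (R : Type u) (M : Type v) (N : Type w) [CommRing R] [IsDomain R]
    [AddCommGroup M] [Module R M] [AddCommGroup N] [Module R N] :
    Module.rank R (M × N) = lift.{w} (Module.rank R M) + lift.{v} (Module.rank R N) := by
  have rank_ker_snd : Module.rank R (LinearMap.ker (LinearMap.snd R M N)) =
      lift.{w} (Module.rank R M) := by
    rw [LinearMap.ker_snd, ← lift_umax.{v, w},
      ← lift_rank_range_of_injective (LinearMap.inl R M N) LinearMap.inl_injective,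
      lift_id'.{v, max v w}]
  have rank_nullity := LinearMap.lift_rank_eq_of_surjective
    (LinearMap.snd_surjective (R := R) (M := M) (M₂ := N))
  rwa [rank_ker_snd, lift_umax.{w, v}, lift_id'.{w, max v w}, lift_id'.{w, max v w}, add_comm]
    at rank_nullity

section Characters

variable {R L : Type*} [CommRing R] [CommRing L] [IsDomain L] [Algebra R L] [FaithfulSMul R L]

theorem mk_algHom_le_of_rank_le {B : Type*} [Ring B] [Algebra R B] {n : ℕ}
    (hn : Module.rank R B ≤ n) : #(B →ₐ[R] L) ≤ n := by
  let K := FractionRing L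
  have : FaithfulSMul R K := FaithfulSMul.trans R L K
  have rank_baseChange_le : Module.rank K (K ⊗[R] B) ≤ n := by
    rw [← lift_le_nat_iff, (TensorProduct.isBaseChange R B K).lift_rank_eq]
    exact lift_le_nat_iff.mpr hn
  have : Module.Finite K (K ⊗[R] B) :=
    rank_lt_aleph0_iff.mp (rank_baseChange_le.trans_lt natCast_lt_aleph0)
  have mk_baseChange_algHom_le : #(K ⊗[R] B →ₐ[K] K) ≤ n :=
    (cardinalMk_algHom_le_rank K (K ⊗[R] B) K).trans (lift_le_nat_iff.mpr rank_baseChange_le)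
  let extend : (B →ₐ[R] L) → (K ⊗[R] B →ₐ[K] K) := fun χ =>
    AlgHom.liftEquiv R K B K ((IsScalarTower.toAlgHom R L K).comp χ)
  have extend_injective : Function.Injective extend :=
    (AlgHom.liftEquiv R K B K).injective.comp fun χ ψ h =>
      AlgHom.ext fun b => IsFractionRing.injective L K (DFunLike.congr_fun h b)
  exact lift_le_nat_iff.mp <| (lift_mk_le_lift_mk_of_injective extend_injective).trans
    (lift_le_nat_iff.mpr mk_baseChange_algHom_le)

theorem mk_nonUnitalAlgHom_ne_zero_le_of_rank_le {A : Type*} [NonUnitalRing A] [Module R A]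
    [IsScalarTower R A A] [SMulCommClass R A A] {n : ℕ} (hn : Module.rank R A ≤ n) :
    #{χ : A →ₙₐ[R] L // χ ≠ 0} ≤ n := by
  have : IsDomain R := (FaithfulSMul.algebraMap_injective R L).isDomain
  have rank_unitization_le : Module.rank R (Unitization R A) ≤ (n + 1 : ℕ) := by
    rw [(Unitization.linearEquiv R R A).rank_eq, rank_prod_of_isDomain, rank_self, lift_one,
      add_comm, Nat.cast_succ]
    gcongr
    exact lift_le_nat_iff.mpr hn
  have mk_nonUnitalAlgHom_le : #(A →ₙₐ[R] L) ≤ (n + 1 : ℕ) := by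
    rw [← lift_le_nat_iff, mk_congr_lift Unitization.lift, lift_le_nat_iff]
    exact mk_algHom_le_of_rank_le rank_unitization_le
  rwa [← mk_sum_compl {(0 : A →ₙₐ[R] L)}, mk_singleton, Nat.cast_succ, add_comm,
    add_le_add_iff_of_lt_aleph0 one_lt_aleph0] at mk_nonUnitalAlgHom_le

end Characters

section Coordinates

variable {R ι κ : Type*} [CommRing R] (A : NonUnitalSubalgebra R (ι → R))

/-- The `j`-th coordinate of `ι → R`, as a character of the non-unital subalgebra `A`. -/
def coordHom (j : ι) : A →ₙₐ[R] R where
  toFun a := (a : ι → R) j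
  map_smul' _ _ := rfl
  map_zero' := rfl
  map_add' _ _ := rfl
  map_mul' _ _ := rfl

/-- The coordinates that do not vanish identically on `A`. As a set of characters, it counts
coordinates that agree on `A` only once. -/
def nonzeroCoordHoms : Set (A →ₙₐ[R] R) := Set.range (coordHom A) \ {0}

variable {A} (e : κ ≃ nonzeroCoordHoms A)

/-- The map that keeps each nonzero coordinate of `A` exactly once, in the order given by the
enumeration `e`. -/
def mergeCoords : A →ₙₐ[R] (κ → R) where
  toFun a i := (e i : A →ₙₐ[R] R) a
  map_smul' _ _ := funext fun _ => map_smul _ _ _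
  map_zero' := funext fun _ => map_zero _
  map_add' _ _ := funext fun _ => map_add _ _ _
  map_mul' _ _ := funext fun _ => map_mul _ _ _

open Classical in
/-- The acceptable map attached to `A`: it copies the entry of `x` at the index of the `j`-th
coordinate of `A` to position `j`, and puts `0` where that coordinate vanishes on `A`. -/
noncomputable def copyCoords (x : κ → R) (j : ι) : R :=
  if hj : coordHom A j = 0 then 0 else x (e.symm ⟨coordHom A j, Set.mem_range_self j, hj⟩)

theorem coordHom_eq_zero_or_exists_eq (j : ι) :
    coordHom A j = 0 ∨ ∃ i, coordHom A j = e i := by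
  refine or_iff_not_imp_left.mpr fun hj =>
    ⟨e.symm ⟨coordHom A j, Set.mem_range_self j, hj⟩, ?_⟩
  rw [e.apply_symm_apply]

theorem copyCoords_of_coordHom_eq_zero {j : ι} (hj : coordHom A j = 0) (x : κ → R) :
    copyCoords e x j = 0 :=
  dif_pos hj

theorem copyCoords_of_coordHom_eq {j : ι} {i : κ} (hij : coordHom A j = e i) (x : κ → R) :
    copyCoords e x j = x i := by
  have hj : coordHom A j ≠ 0 := hij ▸ (e i).2.2
  have index_eq : e.symm ⟨coordHom A j, Set.mem_range_self j, hj⟩ = i :=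
    e.symm_apply_eq.mpr (Subtype.ext hij)
  rw [copyCoords, dif_neg hj, index_eq]

theorem copyCoords_eq_apply_or_eq_zero (j : ι) :
    (∃ i, ∀ x, copyCoords e x j = x i) ∨ ∀ x, copyCoords e x j = 0 :=
  (coordHom_eq_zero_or_exists_eq e j).symm.imp
    (fun ⟨i, hij⟩ => ⟨i, copyCoords_of_coordHom_eq e hij⟩) (copyCoords_of_coordHom_eq_zero e)

theorem copyCoords_injective : Function.Injective (copyCoords e) := by
  intro x y hxy
  funext i
  obtain ⟨j, hij⟩ := (e i).2.1
  rw [← copyCoords_of_coordHom_eq e hij x, hxy, copyCoords_of_coordHom_eq e hij]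

theorem copyCoords_mergeCoords (a : A) : copyCoords e (mergeCoords e a) = a := by
  funext j
  change copyCoords e (mergeCoords e a) j = coordHom A j a
  obtain hj | ⟨i, hij⟩ := coordHom_eq_zero_or_exists_eq e j
  · rw [copyCoords_of_coordHom_eq_zero e hj, hj, NonUnitalAlgHom.zero_apply]
  · rw [copyCoords_of_coordHom_eq e hij, hij]
    rfl

theorem mergeCoords_injective : Function.Injective (mergeCoords e) := fun a b hab =>
  Subtype.ext <| by rw [← copyCoords_mergeCoords e a, hab, copyCoords_mergeCoords]

theorem coe_eq_image_copyCoords :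
    (A : Set (ι → R)) = copyCoords e '' NonUnitalAlgHom.range (mergeCoords e) := by
  have comp_eq_coe : copyCoords e ∘ mergeCoords e = ((↑) : A → ι → R) :=
    funext (copyCoords_mergeCoords e)
  rw [NonUnitalAlgHom.coe_range, ← Set.range_comp, comp_eq_coe]
  exact Subtype.range_coe.symm

theorem rank_range_mergeCoords {n : ℕ} (hn : Module.rank R A = n) :
    Module.rank R (NonUnitalAlgHom.range (mergeCoords e)) = n := by
  let merge : A →ₗ[R] (κ → R) := mergeCoords e
  have rank_range := lift_rank_range_of_injective merge (mergeCoords_injective e)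
  rwa [hn, lift_natCast, lift_eq_nat_iff] at rank_range

theorem mk_nonzeroCoordHoms_of_rank_eq [IsDomain R] {n : ℕ} (hn : Module.rank R A = n) :
    #(nonzeroCoordHoms A) = n := by
  have mk_le : #(nonzeroCoordHoms A) ≤ n :=
    (mk_le_mk_of_subset fun _ hχ => hχ.2).trans (mk_nonUnitalAlgHom_ne_zero_le_of_rank_le hn.le)
  have : Finite (nonzeroCoordHoms A) := lt_aleph0_iff_finite.mp (mk_le.trans_lt natCast_lt_aleph0)
  cases nonempty_fintype (nonzeroCoordHoms A)
  let merge : A →ₗ[R] (nonzeroCoordHoms A → R) := mergeCoords (Equiv.refl (nonzeroCoordHoms A))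
  have rank_le := LinearMap.lift_rank_le_of_injective merge (mergeCoords_injective _)
  rw [rank_fun', hn] at rank_le
  exact mk_le.antisymm (by simpa using rank_le)

end Coordinates

theorem rigidity_acceptable_general {R ι : Type*} [CommRing R] [IsDomain R] {n : ℕ}
    (A : NonUnitalSubalgebra R (ι → R)) (hrank : Module.rank R A = n) :
    ∃ g : (Fin n → R) → (ι → R), ∃ B : NonUnitalSubalgebra R (Fin n → R),
      (Function.Injective g ∧ ∀ j, (∃ i, ∀ x, g x j = x i) ∨ ∀ x, g x j = 0) ∧
      Module.rank R B = n ∧ (A : Set (ι → R)) = g '' B := by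
  obtain ⟨e⟩ : Nonempty (Fin n ≃ nonzeroCoordHoms A) := by
    rw [← lift_mk_eq', mk_nonzeroCoordHoms_of_rank_eq hrank, mk_fin, lift_natCast, lift_natCast]
  exact ⟨copyCoords e, NonUnitalAlgHom.range (mergeCoords e),
    ⟨copyCoords_injective e, copyCoords_eq_apply_or_eq_zero e⟩,
    rank_range_mergeCoords e hrank, coe_eq_image_copyCoords e⟩

/-- Every multiplicative sublattice of co-rank `k` in `ℤ^{n+k}` is the image of a full
rank multiplicative sublattice of `ℤ^n` under an acceptable map. -/
theorem rigidity_acceptable (n k : ℕ) (L' : Submodule ℤ (Fin (n + k) → ℤ))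
    (hmul : IsMulClosed L') (hrank : Module.finrank ℤ L' = n) :
    ∃ g : (Fin n → ℤ) → (Fin (n + k) → ℤ), ∃ L : Submodule ℤ (Fin n → ℤ),
      IsAcceptable g ∧ IsMulClosed L ∧ Module.finrank ℤ L = n ∧
      (L' : Set (Fin (n + k) → ℤ)) = g '' (L : Set (Fin n → ℤ)) := by
  obtain ⟨g, B, hg, hB, himage⟩ := rigidity_acceptable_general
    { L' with mul_mem' := fun hu hv => hmul _ hu _ hv } (hrank ▸ (finrank_eq_rank ℤ L').symm)
  exact ⟨g, B.toSubmodule, hg, fun _ hu _ hv => B.mul_mem hu hv, finrank_eq_of_rank_eq hB, himage⟩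
end

section
/- Every multiplicative sublattice of co-rank k in ℤ^{n+k} is of the form g(L), where g : ℤ^n → ℤ^{n+k} is an ordered acceptable map and L is a multiplicative sublattice of full rank n in ℤ^n; moreover, such g and L are uniquely determined by the sublattice. -/
open Classical in
/-- `A_i^g`: the set of output coordinates of `g` carrying the input coordinate `x i`. -/
noncomputable def coordSet {n k : ℕ} (g : (Fin n → ℤ) → (Fin (n + k) → ℤ))
    (i : Fin n) : Finset (Fin (n + k)) :=
  Finset.univ.filter fun j => ∀ x, g x j = x i

/-- An acceptable map `g` is ordered if `min A_i^g < min A_j^g` whenever `i < j`. -/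
def IsOrdered {n k : ℕ} (g : (Fin n → ℤ) → (Fin (n + k) → ℤ)) : Prop :=
  ∀ i₁ i₂ : Fin n, i₁ < i₂ → (coordSet g i₁).min < (coordSet g i₂).min

/-!
Call a coordinate of a set `S` of vectors a leader if it does not vanish identically on `S` and
differs on `S` from every earlier coordinate. Every coordinate vanishes on `S` or agrees on `S` with
a leader, so vectors of `S` are determined by their values at the leaders.

If `S = L'` is a multiplicative lattice, then for each leader `a` it contains a vector that is
nonzero at `a` and zero at all other leaders, so the rank of `L'` is the number of leaders.
Hence restriction to the leaders is the required lattice `L`, and `g` copies the value at each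
leader to the coordinates agreeing with it. Conversely, every coordinate of a lattice of full rank
is a leader. So for any ordered acceptable `g` with `L' = g(L)`, the numbers `min A_i^g` are the
leaders of `L'` in increasing order and `A_i^g` consists of the coordinates agreeing on `L'` with
`min A_i^g`, which recovers `g` from `L'`.
-/

section Leaders

variable {ι α : Type*} [LinearOrder ι] [Zero α] {S : Set (ι → α)}

/-- The leaders of a set `S` of vectors: the coordinates that are not identically zero on `S` and
do not agree on `S` with any smaller coordinate. -/
def leaders (S : Set (ι → α)) : Set ι :=
  {a | (∃ v ∈ S, v a ≠ 0) ∧ ∀ b < a, ∃ v ∈ S, v b ≠ v a}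

lemma eq_of_mem_leaders_of_agree {a b : ι} (ha : a ∈ leaders S) (hb : b ∈ leaders S)
    (hab : ∀ v ∈ S, v a = v b) : a = b := by
  rcases lt_trichotomy a b with hlt | heq | hgt
  · obtain ⟨v, hv, hne⟩ := hb.2 a hlt
    exact absurd (hab v hv) hne
  · exact heq
  · obtain ⟨v, hv, hne⟩ := ha.2 b hgt
    exact absurd (hab v hv).symm hne

variable [WellFoundedLT ι]

lemma exists_mem_leaders_agree {j : ι} (hj : ∃ v ∈ S, v j ≠ 0) :
    ∃ a ∈ leaders S, ∀ v ∈ S, v j = v a := by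
  induction j using WellFoundedLT.induction with
  | ind j ih =>
    by_cases hfirst : ∀ b < j, ∃ v ∈ S, v b ≠ v j
    · exact ⟨j, ⟨hj, hfirst⟩, fun _ _ ↦ rfl⟩
    · push Not at hfirst
      obtain ⟨b, hbj, hagree⟩ := hfirst
      obtain ⟨v, hv, hne⟩ := hj
      obtain ⟨a, ha, hba⟩ := ih b hbj ⟨v, hv, hagree v hv ▸ hne⟩
      exact ⟨a, ha, fun w hw ↦ (hagree w hw).symm.trans (hba w hw)⟩

lemma eq_of_eqOn_leaders {u v : ι → α} (hu : u ∈ S) (hv : v ∈ S)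
    (huv : Set.EqOn u v (leaders S)) : u = v := by
  funext j
  by_cases hj : ∃ w ∈ S, w j ≠ 0
  · obtain ⟨a, ha, hja⟩ := exists_mem_leaders_agree hj
    rw [hja u hu, hja v hv, huv ha]
  · push Not at hj
    rw [hj u hu, hj v hv]

end Leaders

lemma linearIndependent_of_pairwise_apply_eq_zero
    {κ ι R : Type*} [Ring R] [NoZeroDivisors R] {v : κ → ι → R} {a : κ → ι}
    (hoff : Pairwise fun i j ↦ v i (a j) = 0) (hdiag : ∀ i, v i (a i) ≠ 0) :
    LinearIndependent R v := by
  rw [linearIndependent_iff']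
  intro s c hc i hi
  have hsum : ∑ j ∈ s, c j * v j (a i) = 0 := by simpa using congrFun hc (a i)
  rw [Finset.sum_eq_single_of_mem i hi fun j _ hji ↦ by rw [hoff hji, mul_zero]] at hsum
  exact (mul_eq_zero.mp hsum).resolve_right (hdiag i)

lemma natCard_le_finrank_of_linearIndependent {κ R M : Type*} [Ring R] [StrongRankCondition R]
    [AddCommGroup M] [Module R M] [Module.Finite R M] {L : Submodule R M} {v : κ → M}
    (hv : LinearIndependent R v) (hvL : ∀ i, v i ∈ L) : Nat.card κ ≤ Module.finrank R L := by
  have := nontrivial_of_invariantBasisNumber R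
  have hvL' : LinearIndependent R fun i ↦ (⟨v i, hvL i⟩ : L) := .of_comp L.subtype hv
  have hfin : Module.rank R L < Cardinal.aleph0 :=
    (Submodule.rank_le L).trans_lt (Module.rank_lt_aleph0 R M)
  simpa [Nat.card, Module.finrank] using
    Cardinal.toNat_le_toNat hvL'.cardinal_lift_le_rank (by simpa using hfin)

section Rank

variable {ι R : Type*} [CommRing R] {L : Submodule R (ι → R)}

lemma exists_mem_apply_ne_zero_forall_apply_eq_zero [NoZeroDivisors R]
    (hL : ∀ u ∈ L, ∀ v ∈ L, u * v ∈ L) {a : ι} (ha : ∃ v ∈ L, v a ≠ 0) (s : Finset ι)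
    (hs : ∀ b ∈ s, ∃ v ∈ L, v b ≠ v a) :
    ∃ v ∈ L, v a ≠ 0 ∧ ∀ b ∈ s, v b = 0 := by
  classical
  induction s using Finset.induction_on with
  | empty => simpa using ha
  | insert b s _ ih =>
    simp only [Finset.forall_mem_insert] at hs ⊢
    obtain ⟨⟨w, hw, hwba⟩, hs⟩ := hs
    obtain ⟨v, hv, hva, hvs⟩ := ih hs
    -- `v * (w - w b)` also vanishes at `b`
    refine ⟨v * w - w b • v, L.sub_mem (hL v hv w hw) (L.smul_mem _ hv), ?_, ?_, ?_⟩
    · have : v a * (w a - w b) ≠ 0 := mul_ne_zero hva (sub_ne_zero.mpr hwba.symm)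
      simpa [mul_sub, mul_comm] using this
    · simp [mul_comm]
    · intro c hc
      simp [hvs c hc]

variable [Finite ι] [LinearOrder ι]

lemma finrank_le_natCard_leaders [Nontrivial R] (L : Submodule R (ι → R)) :
    Module.finrank R L ≤ Nat.card (leaders (L : Set (ι → R))) := by
  have := Fintype.ofFinite (leaders (L : Set (ι → R)))
  let restrict : L →ₗ[R] leaders (L : Set (ι → R)) → R :=
    (LinearMap.funLeft R R Subtype.val).comp L.subtype
  have hinj : Function.Injective restrict := fun u v huv ↦
    Subtype.ext <| eq_of_eqOn_leaders u.2 v.2 fun a ha ↦ congrFun huv ⟨a, ha⟩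
  simpa using LinearMap.finrank_le_finrank_of_injective hinj

lemma leaders_eq_univ_of_finrank_eq [Nontrivial R] (hL : Module.finrank R L = Nat.card ι) :
    leaders (L : Set (ι → R)) = Set.univ := by
  refine Set.eq_of_subset_of_ncard_le (Set.subset_univ _) ?_
  rw [Set.ncard_univ, ← hL]
  exact finrank_le_natCard_leaders L

lemma natCard_leaders_eq_finrank [IsDomain R] (hL : ∀ u ∈ L, ∀ v ∈ L, u * v ∈ L) :
    Nat.card (leaders (L : Set (ι → R))) = Module.finrank R L := by
  refine le_antisymm ?_ (finrank_le_natCard_leaders L)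
  have hdual (a : leaders (L : Set (ι → R))) :
      ∃ v ∈ L, v a ≠ 0 ∧ ∀ b ∈ leaders (L : Set (ι → R)) \ {↑a}, v b = 0 := by
    have hfin := Set.toFinite (leaders (L : Set (ι → R)) \ {↑a})
    simpa using exists_mem_apply_ne_zero_forall_apply_eq_zero hL a.2.1 hfin.toFinset
      fun b hb ↦ by
        rw [Set.Finite.mem_toFinset] at hb
        by_contra! hagree
        exact hb.2 (eq_of_mem_leaders_of_agree hb.1 a.2 hagree)
  choose v hvL hdiag hoff using hdual
  refine natCard_le_finrank_of_linearIndependent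
    (linearIndependent_of_pairwise_apply_eq_zero (a := Subtype.val) ?_ hdiag) hvL
  exact fun a b hab ↦ hoff a b ⟨b.2, fun hba ↦ hab (Subtype.ext hba.symm)⟩

end Rank

section OrderedMaps

variable {ι κ R : Type*} [Fintype ι] {g : (κ → R) → ι → R}

open Classical in
/-- The set `A_i^g` of `coordSet`, with an arbitrary coefficient type in place of `ℤ` and arbitrary
index types. -/
noncomputable def coordFiber (g : (κ → R) → ι → R) (i : κ) : Finset ι :=
  Finset.univ.filter fun j ↦ ∀ x, g x j = x i

lemma mem_coordFiber {i : κ} {j : ι} : j ∈ coordFiber g i ↔ ∀ x, g x j = x i := by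
  simp [coordFiber]

variable [LinearOrder ι] [LinearOrder κ]

/-- The notion `IsOrdered` with an arbitrary coefficient type in place of `ℤ` and arbitrary linearly
ordered index types. -/
def IsOrderedMap (g : (κ → R) → ι → R) : Prop :=
  ∀ i₁ i₂ : κ, i₁ < i₂ → (coordFiber g i₁).min < (coordFiber g i₂).min

lemma isOrderedMap_iff_strictMono {first : κ → ι}
    (hfirst : ∀ i, IsLeast (coordFiber g i : Set ι) (first i)) :
    IsOrderedMap g ↔ StrictMono first := by
  have hmin (i : κ) : (coordFiber g i).min = first i :=
    le_antisymm (Finset.min_le (hfirst i).1)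
      (Finset.le_min fun j hj ↦ WithTop.coe_le_coe.mpr ((hfirst i).2 hj))
  simp only [IsOrderedMap, hmin, WithTop.coe_lt_coe, StrictMono]

end OrderedMaps

section AcceptableMaps

variable {ι κ R : Type*} [Zero R] {g : (κ → R) → ι → R}

/-- The notion `IsAcceptable` with an arbitrary coefficient type in place of `ℤ` and arbitrary
index types. -/
def IsAcceptableMap (g : (κ → R) → ι → R) : Prop :=
  Function.Injective g ∧ ∀ j, (∃ i, ∀ x, g x j = x i) ∨ ∀ x, g x j = 0

variable [Fintype ι]

lemma IsAcceptableMap.coordFiber_nonempty [Nontrivial R] (hg : IsAcceptableMap g) (i : κ) :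
    (coordFiber g i).Nonempty := by
  classical
  obtain ⟨r, hr⟩ := exists_ne (0 : R)
  by_contra! hempty
  have hsame : g (Pi.single i r) = g 0 := by
    funext j
    rcases hg.2 j with ⟨i', hj⟩ | hj
    · have hi : i' ≠ i := by
        rintro rfl
        exact Finset.eq_empty_iff_forall_notMem.mp hempty j (mem_coordFiber.mpr hj)
      rw [hj, hj, Pi.single_eq_of_ne hi, Pi.zero_apply]
    · rw [hj, hj]
  exact hr (by simpa using congrFun (hg.1 hsame) i)

lemma IsAcceptableMap.eq_of_coordFiber_eq {g₁ g₂ : (κ → R) → ι → R} (h₁ : IsAcceptableMap g₁)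
    (h₂ : IsAcceptableMap g₂) (h : coordFiber g₁ = coordFiber g₂) : g₁ = g₂ := by
  have hiff (i : κ) (j : ι) : (∀ x, g₁ x j = x i) ↔ ∀ x, g₂ x j = x i := by
    rw [← mem_coordFiber, ← mem_coordFiber, h]
  funext x j
  rcases h₁.2 j with ⟨i, hi⟩ | hzero₁
  · rw [hi, (hiff i j).mp hi]
  · rcases h₂.2 j with ⟨i, hi⟩ | hzero₂
    · rw [hi, (hiff i j).mpr hi]
    · rw [hzero₁, hzero₂]

variable [LinearOrder κ] {S : Set (κ → R)}

lemma IsAcceptableMap.mem_coordFiber_iff_agree_on_image (hg : IsAcceptableMap g)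
    (hS : leaders S = Set.univ) {i : κ} {a j : ι} (ha : a ∈ coordFiber g i) :
    j ∈ coordFiber g i ↔ ∀ v ∈ g '' S, v j = v a := by
  have hlead (i : κ) : i ∈ leaders S := hS ▸ Set.mem_univ i
  simp only [Set.forall_mem_image, mem_coordFiber.mp ha, mem_coordFiber]
  refine ⟨fun hj x _ ↦ hj x, fun hagree ↦ ?_⟩
  rcases hg.2 j with ⟨i', hj⟩ | hzero
  · obtain rfl : i' = i := eq_of_mem_leaders_of_agree (hlead i') (hlead i) fun x hx ↦
      (hj x).symm.trans (hagree hx)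
    exact hj
  · obtain ⟨x, hx, hxi⟩ := (hlead i).1
    exact absurd ((hagree hx).symm.trans (hzero x)) hxi

variable [LinearOrder ι]

lemma IsAcceptableMap.leaders_image_eq_range (hg : IsAcceptableMap g) (hS : leaders S = Set.univ)
    {first : κ → ι} (hfirst : ∀ i, IsLeast (coordFiber g i : Set ι) (first i)) :
    leaders (g '' S) = Set.range first := by
  have hlead (i : κ) : first i ∈ leaders (g '' S) := by
    obtain ⟨x, hx, hxi⟩ := (hS ▸ Set.mem_univ i : i ∈ leaders S).1
    refine ⟨⟨g x, Set.mem_image_of_mem g hx, by rwa [mem_coordFiber.mp (hfirst i).1]⟩, ?_⟩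
    intro j hj
    by_contra! hagree
    exact hj.not_ge
      ((hfirst i).2 ((hg.mem_coordFiber_iff_agree_on_image hS (hfirst i).1).mpr hagree))
  refine Set.Subset.antisymm (fun j hj ↦ ?_) (Set.range_subset_iff.mpr hlead)
  rcases hg.2 j with ⟨i, hi⟩ | hzero
  · have hagree :=
      (hg.mem_coordFiber_iff_agree_on_image hS (hfirst i).1).mp (mem_coordFiber.mpr hi)
    exact ⟨i, (eq_of_mem_leaders_of_agree hj (hlead i) hagree).symm⟩
  · obtain ⟨⟨_, ⟨x, -, rfl⟩, hne⟩, -⟩ := hj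
    exact absurd (hzero x) hne

lemma IsAcceptableMap.eq_of_image_eq [Nontrivial R] [WellFoundedLT κ] {g₁ g₂ : (κ → R) → ι → R}
    {S₁ S₂ : Set (κ → R)} (hg₁ : IsAcceptableMap g₁) (hg₂ : IsAcceptableMap g₂)
    (ho₁ : IsOrderedMap g₁) (ho₂ : IsOrderedMap g₂) (hS₁ : leaders S₁ = Set.univ)
    (hS₂ : leaders S₂ = Set.univ) (himage : g₁ '' S₁ = g₂ '' S₂) : g₁ = g₂ := by
  have hfirst₁ (i : κ) := (coordFiber g₁ i).isLeast_min' (hg₁.coordFiber_nonempty i)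
  have hfirst₂ (i : κ) := (coordFiber g₂ i).isLeast_min' (hg₂.coordFiber_nonempty i)
  have hfirst := (((isOrderedMap_iff_strictMono hfirst₁).mp ho₁).range_inj
    ((isOrderedMap_iff_strictMono hfirst₂).mp ho₂)).mp <| by
      rw [← hg₁.leaders_image_eq_range hS₁ hfirst₁, himage, hg₂.leaders_image_eq_range hS₂ hfirst₂]
  refine hg₁.eq_of_coordFiber_eq hg₂ (funext fun i ↦ Finset.ext fun j ↦ ?_)
  rw [hg₁.mem_coordFiber_iff_agree_on_image hS₁ (hfirst₁ i).1,
    hg₂.mem_coordFiber_iff_agree_on_image hS₂ (hfirst₂ i).1, himage, congrFun hfirst i]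

end AcceptableMaps

section Spread

variable {ι κ R : Type*} [Zero R] {S : Set (ι → R)} {e : κ → ι}

open Classical in
/-- The map copying `x i` to every coordinate that agrees on `S` with the coordinate `e i`, and
filling the remaining coordinates with `0`. The index `i` is chosen arbitrarily if there are
several. -/
noncomputable def spread (S : Set (ι → R)) (e : κ → ι) (x : κ → R) (j : ι) : R :=
  if h : ∃ i, ∀ v ∈ S, v j = v (e i) then x h.choose else 0

variable [LinearOrder ι]

lemma spread_apply_of_agree (he : Function.Injective e) (hrange : Set.range e = leaders S)
    {i : κ} {j : ι} (hij : ∀ v ∈ S, v j = v (e i)) (x : κ → R) :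
    spread S e x j = x i := by
  have hex : ∃ i, ∀ v ∈ S, v j = v (e i) := ⟨i, hij⟩
  have hlead (i : κ) : e i ∈ leaders S := hrange ▸ Set.mem_range_self i
  have hchoose : hex.choose = i := he <| eq_of_mem_leaders_of_agree (hlead _) (hlead _)
    fun v hv ↦ (hex.choose_spec v hv).symm.trans (hij v hv)
  rw [spread, dif_pos hex, hchoose]

lemma spread_apply_self (he : Function.Injective e) (hrange : Set.range e = leaders S)
    (x : κ → R) (i : κ) : spread S e x (e i) = x i :=
  spread_apply_of_agree he hrange (fun _ _ ↦ rfl) x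

lemma isAcceptableMap_spread (he : Function.Injective e) (hrange : Set.range e = leaders S) :
    IsAcceptableMap (spread S e) := by
  refine ⟨fun x y hxy ↦ funext fun i ↦ ?_, fun j ↦ ?_⟩
  · simpa only [spread_apply_self he hrange] using congrFun hxy (e i)
  · by_cases hj : ∃ i, ∀ v ∈ S, v j = v (e i)
    · obtain ⟨i, hi⟩ := hj
      exact Or.inl ⟨i, spread_apply_of_agree he hrange hi⟩
    · exact Or.inr fun x ↦ dif_neg hj

lemma spread_comp [WellFoundedLT ι] (he : Function.Injective e)
    (hrange : Set.range e = leaders S) {v : ι → R} (hv : v ∈ S) : spread S e (v ∘ e) = v := by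
  funext j
  by_cases hj : ∃ i, ∀ w ∈ S, w j = w (e i)
  · obtain ⟨i, hi⟩ := hj
    rw [spread_apply_of_agree he hrange hi, hi v hv, Function.comp_apply]
  · have hvj : v j = 0 := by
      by_contra hne
      obtain ⟨a, ha, hja⟩ := exists_mem_leaders_agree ⟨v, hv, hne⟩
      obtain ⟨i, rfl⟩ := hrange.symm ▸ ha
      exact hj ⟨i, hja⟩
    rw [spread, dif_neg hj, hvj]

lemma isLeast_coordFiber_spread [Fintype ι] (he : Function.Injective e)
    (hrange : Set.range e = leaders S) (i : κ) :
    IsLeast (coordFiber (spread S e) i : Set ι) (e i) := by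
  refine ⟨mem_coordFiber.mpr fun x ↦ spread_apply_self he hrange x i, fun j hj ↦ ?_⟩
  by_contra! hlt
  obtain ⟨v, hv, hne⟩ := (hrange ▸ Set.mem_range_self i : e i ∈ leaders S).2 j hlt
  have hvj := mem_coordFiber.mp hj (v ∘ e)
  rw [spread_comp he hrange hv] at hvj
  exact hne hvj

end Spread

lemma exists_strictMono_range_eq {ι : Type*} [LinearOrder ι] [Finite ι] {s : Set ι} {n : ℕ}
    (hs : Nat.card s = n) : ∃ e : Fin n → ι, StrictMono e ∧ Set.range e = s := by
  have hfin := s.toFinite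
  have hcard : hfin.toFinset.card = n := by rw [← hs, Nat.card_eq_card_finite_toFinset hfin]
  exact ⟨_, (hfin.toFinset.orderEmbOfFin hcard).strictMono, by simp⟩

section Rigidity

variable {ι R : Type*} [CommRing R] [IsDomain R] [Fintype ι] [LinearOrder ι] {n : ℕ}

lemma exists_ordered_acceptable {L' : Submodule R (ι → R)}
    (hmul : ∀ u ∈ L', ∀ v ∈ L', u * v ∈ L') (hrank : Module.finrank R L' = n) :
    ∃ (g : (Fin n → R) → ι → R) (L : Submodule R (Fin n → R)),
      IsAcceptableMap g ∧ IsOrderedMap g ∧ (∀ u ∈ L, ∀ v ∈ L, u * v ∈ L) ∧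
      Module.finrank R L = n ∧ (L' : Set (ι → R)) = g '' L := by
  obtain ⟨e, hmono, hrange⟩ :=
    exists_strictMono_range_eq ((natCard_leaders_eq_finrank hmul).trans hrank)
  let g : (Fin n → R) → ι → R := spread (L' : Set (ι → R)) e
  let restrict : (ι → R) →ₗ[R] Fin n → R := LinearMap.funLeft R R e
  have hsection (v) (hv : v ∈ L') : g (restrict v) = v := spread_comp hmono.injective hrange hv
  refine ⟨g, L'.map restrict, isAcceptableMap_spread hmono.injective hrange, ?_, ?_, ?_, ?_⟩
  · exact (isOrderedMap_iff_strictMono (isLeast_coordFiber_spread hmono.injective hrange)).mpr hmono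
  · rintro _ ⟨u, hu, rfl⟩ _ ⟨v, hv, rfl⟩
    exact ⟨u * v, hmul u hu v hv, rfl⟩
  · have hinj : Function.Injective (restrict.domRestrict L') := fun u v huv ↦
      Subtype.ext <| by rw [← hsection u u.2, ← hsection v v.2]; exact congrArg g huv
    rw [← LinearMap.range_domRestrict, LinearMap.finrank_range_of_inj hinj, hrank]
  · rw [Submodule.map_coe, Set.image_image, Set.image_congr hsection, Set.image_id']

theorem rigidity_ordered_acceptable_unique_general (L' : Submodule R (ι → R))
    (hmul : ∀ u ∈ L', ∀ v ∈ L', u * v ∈ L') (hrank : Module.finrank R L' = n) :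
    ∃! p : ((Fin n → R) → ι → R) × Submodule R (Fin n → R),
      IsAcceptableMap p.1 ∧ IsOrderedMap p.1 ∧ (∀ u ∈ p.2, ∀ v ∈ p.2, u * v ∈ p.2) ∧
      Module.finrank R p.2 = n ∧ (L' : Set (ι → R)) = p.1 '' p.2 := by
  obtain ⟨g, L, hgL⟩ := exists_ordered_acceptable hmul hrank
  refine existsUnique_of_exists_of_unique ⟨(g, L), hgL⟩ ?_
  rintro ⟨g₁, L₁⟩ ⟨g₂, L₂⟩ ⟨hg₁, ho₁, -, hr₁, himage₁⟩ ⟨hg₂, ho₂, -, hr₂, himage₂⟩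
  have himage : g₁ '' L₁ = g₂ '' L₂ := himage₁.symm.trans himage₂
  obtain rfl : g₁ = g₂ := hg₁.eq_of_image_eq hg₂ ho₁ ho₂
    (leaders_eq_univ_of_finrank_eq (by simpa using hr₁))
    (leaders_eq_univ_of_finrank_eq (by simpa using hr₂)) himage
  obtain rfl : L₁ = L₂ := SetLike.coe_injective (hg₁.1.image_injective himage)
  rfl

end Rigidity

/-- Every multiplicative sublattice of co-rank `k` in `ℤ^{n+k}` is the image of a full
rank multiplicative sublattice of `ℤ^n` under an ordered acceptable map, and the
ordered acceptable map and the sublattice are uniquely determined. -/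
theorem rigidity_ordered_acceptable_unique (n k : ℕ)
    (L' : Submodule ℤ (Fin (n + k) → ℤ)) (hmul : IsMulClosed L')
    (hrank : Module.finrank ℤ L' = n) :
    ∃! p : ((Fin n → ℤ) → (Fin (n + k) → ℤ)) × Submodule ℤ (Fin n → ℤ),
      IsAcceptable p.1 ∧ IsOrdered p.1 ∧ IsMulClosed p.2 ∧
      Module.finrank ℤ p.2 = n ∧
      (L' : Set (Fin (n + k) → ℤ)) = p.1 '' (p.2 : Set (Fin n → ℤ)) :=
  rigidity_ordered_acceptable_unique_general L' hmul hrank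
end

section
/- For every n ≥ 2 and every r ≥ 1, the number of subrings of ℤ^n containing the identity (1,…,1) and of index r equals the number of multiplicative sublattices of ℤ^{n−1} of full rank n−1 and index r; that is, f_n(r) = φ_{n−1}(r). -/
/-- `f n r` is the number of subrings of `ℤ^n` (with identity `(1,…,1)`) of index `r`. -/
noncomputable def subringCount (n r : ℕ) : ℕ :=
  Nat.card {R : Subring (Fin n → ℤ) // R.toAddSubgroup.index = r}

/-- `phi m r` is the number of multiplicative sublattices of `ℤ^m` of full rank `m`
and index `r`. -/
noncomputable def phi (m r : ℕ) : ℕ :=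
  Nat.card {L : Submodule ℤ (Fin m → ℤ) //
    IsMulClosed L ∧ Module.finrank ℤ L = m ∧ L.toAddSubgroup.index = r}

/-!
Evaluation at the first coordinate splits `ℤ^(m+1)` as `ℤ · 1 ⊕ ℤ^m`, where `ℤ^m` is the ideal of
vectors with vanishing first coordinate. A subring contains `ℤ · 1`, so it is determined by its
intersection with that ideal, which is an arbitrary non-unital subring of `ℤ^m` of the same index.
A non-unital subring of `ℤ^m` is a multiplicative sublattice, and nonzero index forces full rank.
-/

section Augmentation

variable {A S : Type*} [Ring A] [NonUnitalNonAssocRing S]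

theorem mem_subringClosure_nonUnitalSubring {T : NonUnitalSubring A} {x : A} :
    x ∈ Subring.closure (T : Set A) ↔ ∃ k : ℤ, ∃ t ∈ T, (k : A) + t = x := by
  change x ∈ subalgebraOfSubring (Subring.closure (T : Set A)) ↔ _
  rw [← NonUnitalSubring.unitization_range, AlgHom.mem_range]
  constructor
  · rintro ⟨y, rfl⟩
    exact ⟨y.fst, y.snd, y.snd.2, rfl⟩
  · rintro ⟨k, t, ht, rfl⟩
    exact ⟨Unitization.inl k + Unitization.inr ⟨t, ht⟩, by simp⟩

variable {ι : S →ₙ+* A} {ε : A →+* ℤ}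

theorem exists_intCast_add_eq_of_exact (hex : Function.Exact ι ε) (x : A) :
    ∃ s, (ε x : A) + ι s = x := by
  obtain ⟨s, hs⟩ := (hex (x - (ε x : A))).mp (by simp)
  exact ⟨s, by rw [hs, add_sub_cancel]⟩

theorem subringClosure_map_comap_of_exact (hex : Function.Exact ι ε) (R : Subring A) :
    Subring.closure (((R.toNonUnitalSubring.comap ι).map ι : NonUnitalSubring A) : Set A) = R := by
  refine le_antisymm (Subring.closure_le.mpr ?_) fun x hx ↦ ?_
  · rintro _ ⟨s, hs, rfl⟩
    exact hs
  · obtain ⟨s, hs⟩ := exists_intCast_add_eq_of_exact hex x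
    have hιs : ι s ∈ R := by
      rw [eq_sub_of_add_eq' hs]
      exact R.sub_mem hx (intCast_mem R _)
    exact mem_subringClosure_nonUnitalSubring.mpr ⟨ε x, ι s, ⟨s, hιs, rfl⟩, hs⟩

theorem comap_subringClosure_map_of_exact (hι : Function.Injective ι) (hex : Function.Exact ι ε)
    (T : NonUnitalSubring S) :
    (Subring.closure (T.map ι : Set A)).toNonUnitalSubring.comap ι = T := by
  ext s
  refine ⟨fun hs ↦ ?_, fun hs ↦ Subring.subset_closure ⟨s, hs, rfl⟩⟩
  obtain ⟨k, _, ⟨t, ht, rfl⟩, hks⟩ := mem_subringClosure_nonUnitalSubring.mp hs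
  have hk : k = 0 := by simpa [hex.apply_apply_eq_zero] using congrArg ε hks
  have hts : t = s := hι (by simpa [hk] using hks)
  exact hts ▸ ht

/-- For a split extension `A = ℤ · 1 ⊕ ι(S)` with augmentation `ε`, the correspondence between
subrings of `A` and non-unital subrings of `S`, given by restriction along `ι`; its inverse adjoins
`1` to the image of a non-unital subring. -/
def subringEquivNonUnitalSubring (hι : Function.Injective ι) (hex : Function.Exact ι ε) :
    Subring A ≃ NonUnitalSubring S where
  toFun R := R.toNonUnitalSubring.comap ι
  invFun T := Subring.closure (T.map ι : Set A)
  left_inv := subringClosure_map_comap_of_exact hex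
  right_inv := comap_subringClosure_map_of_exact hι hex

theorem index_comap_toNonUnitalSubring_of_exact (hex : Function.Exact ι ε) (R : Subring A) :
    (R.toNonUnitalSubring.comap ι).toAddSubgroup.index = R.toAddSubgroup.index := by
  have range_sup_eq_top : (ι : S →+ A).range ⊔ R.toAddSubgroup = ⊤ := by
    refine eq_top_iff.mpr fun x _ ↦ ?_
    obtain ⟨s, hs⟩ := exists_intCast_add_eq_of_exact hex x
    rw [← hs, add_comm]
    exact AddSubgroup.add_mem_sup ⟨s, rfl⟩ (intCast_mem R _)
  calc (R.toAddSubgroup.comap (ι : S →+ A)).index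
      = R.toAddSubgroup.relIndex (ι : S →+ A).range := AddSubgroup.index_comap _ _
    _ = R.toAddSubgroup.relIndex ((ι : S →+ A).range ⊔ R.toAddSubgroup) :=
        (AddSubgroup.relIndex_sup_right _ _).symm
    _ = R.toAddSubgroup.index := by rw [range_sup_eq_top, AddSubgroup.relIndex_top_right]

theorem card_subring_index_eq_card_nonUnitalSubring_index (hι : Function.Injective ι)
    (hex : Function.Exact ι ε) (r : ℕ) :
    Nat.card {R : Subring A // R.toAddSubgroup.index = r} =
      Nat.card {T : NonUnitalSubring S // T.toAddSubgroup.index = r} :=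
  Nat.card_congr <| (subringEquivNonUnitalSubring hι hex).subtypeEquiv fun R ↦ by
    rw [← index_comap_toNonUnitalSubring_of_exact hex R]
    rfl

end Augmentation

section ConsZero

variable (R : Type*) (m : ℕ)

/-- The embedding `v ↦ (0, v)` of `R^m` onto the vectors of `R^(m+1)` with vanishing first
coordinate; it is multiplicative but does not preserve `1`. -/
def consZeroHom [NonUnitalNonAssocSemiring R] : (Fin m → R) →ₙ+* (Fin (m + 1) → R) where
  toFun v := Fin.cons 0 v
  map_zero' := by ext i; cases i using Fin.cases <;> simp
  map_add' u v := by ext i; cases i using Fin.cases <;> simp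
  map_mul' u v := by ext i; cases i using Fin.cases <;> simp

theorem consZeroHom_injective [NonUnitalNonAssocSemiring R] :
    Function.Injective (consZeroHom R m) :=
  Fin.cons_right_injective (α := fun _ ↦ R) 0

theorem exact_consZeroHom_evalRingHom [NonAssocSemiring R] :
    Function.Exact (consZeroHom R m) (Pi.evalRingHom (fun _ : Fin (m + 1) ↦ R) 0) := by
  refine fun x ↦ ⟨fun hx ↦ ⟨Fin.tail x, ?_⟩, ?_⟩
  · change x 0 = 0 at hx
    change Fin.cons 0 (Fin.tail x) = x
    rw [← hx, Fin.cons_self_tail]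
  · rintro ⟨v, rfl⟩
    rfl

end ConsZero

section MultiplicativeSublattice

/-- Multiplicative sublattices of `ℤ^m` are the non-unital subrings of `ℤ^m`. -/
def mulClosedEquivNonUnitalSubring (m : ℕ) :
    {L : Submodule ℤ (Fin m → ℤ) // IsMulClosed L} ≃ NonUnitalSubring (Fin m → ℤ) where
  toFun L := { L.1.toAddSubgroup with mul_mem' := fun hu hv ↦ L.2 _ hu _ hv }
  invFun T := ⟨T.toAddSubgroup.toIntSubmodule, fun _ hu _ hv ↦ T.mul_mem hu hv⟩
  left_inv _ := rfl
  right_inv _ := rfl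

variable {m : ℕ}

theorem finrank_eq_of_index_ne_zero {L : Submodule ℤ (Fin m → ℤ)}
    (hL : L.toAddSubgroup.index ≠ 0) : Module.finrank ℤ L = m := by
  have : L.toAddSubgroup.FiniteIndex := ⟨hL⟩
  exact (AddSubgroup.finrank_eq_of_finiteIndex L.toAddSubgroup).trans (Module.finrank_fin_fun ℤ)

theorem phi_eq_card_nonUnitalSubring_index {r : ℕ} (hr : r ≠ 0) :
    phi m r = Nat.card {T : NonUnitalSubring (Fin m → ℤ) // T.toAddSubgroup.index = r} := by
  have drop_finrank (L : Submodule ℤ (Fin m → ℤ)) :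
      (IsMulClosed L ∧ Module.finrank ℤ L = m ∧ L.toAddSubgroup.index = r) ↔
        IsMulClosed L ∧ L.toAddSubgroup.index = r :=
    and_congr_right fun _ ↦ and_iff_right_of_imp fun h ↦ finrank_eq_of_index_ne_zero (h ▸ hr)
  calc phi m r
      = Nat.card {L : Submodule ℤ (Fin m → ℤ) // IsMulClosed L ∧ L.toAddSubgroup.index = r} :=
        Nat.card_congr (Equiv.subtypeEquivRight drop_finrank)
    _ = Nat.card {L : {L : Submodule ℤ (Fin m → ℤ) // IsMulClosed L} //
          L.1.toAddSubgroup.index = r} :=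
        (Nat.card_congr (Equiv.subtypeSubtypeEquivSubtypeInter _ _)).symm
    _ = Nat.card {T : NonUnitalSubring (Fin m → ℤ) // T.toAddSubgroup.index = r} :=
        Nat.card_congr ((mulClosedEquivNonUnitalSubring m).subtypeEquiv fun _ ↦ Iff.rfl)

end MultiplicativeSublattice

/-- `f_n(r) = φ_{n-1}(r)`. -/
theorem subringCount_eq_phi (n r : ℕ) (hn : 2 ≤ n) (hr : 1 ≤ r) :
    subringCount n r = phi (n - 1) r := by
  obtain ⟨m, rfl⟩ : ∃ m, n = m + 1 := Nat.exists_eq_add_of_le' (one_le_two.trans hn)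
  rw [Nat.add_sub_cancel, phi_eq_card_nonUnitalSubring_index (Nat.one_le_iff_ne_zero.mp hr)]
  exact card_subring_index_eq_card_nonUnitalSubring_index (consZeroHom_injective ℤ m)
    (exact_consZeroHom_evalRingHom ℤ m) r
end

section
/- If L is a multiplicative sublattice of co-rank 2 in ℤ^4, then there exist a multiplicative sublattice L′ of full rank in ℤ^2 and an acceptable map f : ℤ^2 → ℤ^4 of the form τ ∘ f_j ∘ σ with σ ∈ S_2, τ ∈ S_4 (permutations acting by permuting coordinates) and j ∈ {1,2,3,4}, where f_1(x,y) = (x,y,0,0), f_2(x,y) = (x,y,y,0), f_3(x,y) = (x,y,y,y), f_4(x,y) = (x,x,y,y), such that L = f(L′); furthermore, the cardinality of the torsion subgroup of ℤ^4/L equals the index [ℤ^2 : L′]. -/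
/-- The four basic maps `ℤ² → ℤ⁴`:
`f₁(x,y) = (x,y,0,0)`, `f₂(x,y) = (x,y,y,0)`, `f₃(x,y) = (x,y,y,y)`,
`f₄(x,y) = (x,x,y,y)`. -/
def basicMap : Fin 4 → (Fin 2 → ℤ) → (Fin 4 → ℤ)
  | 0 => fun x => ![x 0, x 1, 0, 0]
  | 1 => fun x => ![x 0, x 1, x 1, 0]
  | 2 => fun x => ![x 0, x 1, x 1, x 1]
  | 3 => fun x => ![x 0, x 0, x 1, x 1]

/-!
The coordinates of `ℤ⁴`, restricted to `L`, are linear functionals on `L`; list the distinct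
nonzero ones as `w₁, …, wₙ`. Every vector of `L` is determined by its values under these, so `L`
is the image of a lattice `L' ⊆ ℤⁿ` under a map that repeats coordinates and inserts zeros. On
`L'` no coordinate vanishes and no two coordinates agree, and closure under multiplication then
lets one interpolate as Lagrange does: `L'` contains a nonzero multiple of every standard basis
vector. Hence `L'` has full rank, which forces `n = 2`, and `ℤ² ⧸ L'` is torsion. As the map `ℤ² →
ℤ⁴` has a linear left inverse, it identifies `ℤ² ⧸ L'` with the torsion of `ℤ⁴ ⧸ L`. Up to
permutations a coordinate pattern is determined by the sizes of its fibres, and these leave only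
the four basic maps.
-/

open Module

section PatternMap

variable {ι κ : Type*} (R : Type*) [CommSemiring R]

/-- The linear map that repeats coordinates and inserts zeros according to the pattern `c`: the
`i`-th coordinate of the image is `y k` if `c i = some k`, and `0` if `c i = none`. The acceptable
maps are of this form. -/
def patternMap (c : ι → Option κ) : (κ → R) →ₗ[R] (ι → R) :=
  LinearMap.pi fun i => (c i).elim 0 LinearMap.proj

variable {R}

theorem patternMap_apply (c : ι → Option κ) (y : κ → R) (i : ι) :
    patternMap R c y i = (c i).elim 0 y := by
  cases h : c i <;> simp [patternMap, h]

theorem patternMap_mul (c : ι → Option κ) (y z : κ → R) :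
    patternMap R c (y * z) = patternMap R c y * patternMap R c z := by
  ext i
  cases h : c i <;> simp [patternMap_apply, h]

theorem mul_mem_comap_patternMap {L : Submodule R (ι → R)} (hmul : ∀ u ∈ L, ∀ v ∈ L, u * v ∈ L)
    (c : ι → Option κ) {y z : κ → R} (hy : y ∈ L.comap (patternMap R c))
    (hz : z ∈ L.comap (patternMap R c)) : y * z ∈ L.comap (patternMap R c) := by
  rw [Submodule.mem_comap, patternMap_mul]
  exact hmul _ hy _ hz

theorem funLeft_leftInverse_patternMap {c : ι → Option κ} {r : κ → ι}
    (hr : ∀ k, c (r k) = some k) :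
    Function.LeftInverse (LinearMap.funLeft R R r) (patternMap R c) := by
  intro y
  ext k
  simp [LinearMap.funLeft_apply, patternMap_apply, hr]

end PatternMap

section FullRank

variable {κ R : Type*} [CommRing R]

/-- No coordinate vanishes identically on `L`, and no two coordinates agree on `L`. For
multiplicative `L` over a domain this forces full rank. -/
structure SeparatesCoordinates (L : Submodule R (κ → R)) : Prop where
  exists_ne_zero : ∀ k, ∃ x ∈ L, x k ≠ 0
  exists_ne : ∀ k l, k ≠ l → ∃ x ∈ L, x k ≠ x l

variable [IsDomain R] {L : Submodule R (κ → R)}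

theorem SeparatesCoordinates.exists_vanishing_on (hL : SeparatesCoordinates L)
    (hmul : ∀ u ∈ L, ∀ v ∈ L, u * v ∈ L) (k : κ) (s : Finset κ) (hk : k ∉ s) :
    ∃ x ∈ L, x k ≠ 0 ∧ ∀ l ∈ s, x l = 0 := by
  classical
  induction s using Finset.induction_on with
  | empty =>
    obtain ⟨x, hx, hxk⟩ := hL.exists_ne_zero k
    exact ⟨x, hx, hxk, by simp⟩
  | insert l s _ ih =>
    rw [Finset.mem_insert, not_or] at hk
    obtain ⟨x, hx, hxk, hxs⟩ := ih hk.2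
    obtain ⟨y, hy, hykl⟩ := hL.exists_ne k l hk.1
    refine ⟨x * y - y l • x, L.sub_mem (hmul x hx y hy) (L.smul_mem _ hx), ?_, ?_⟩
    · have hval : (x * y - y l • x) k = x k * (y k - y l) := by
        simp only [Pi.sub_apply, Pi.mul_apply, Pi.smul_apply, smul_eq_mul]
        ring
      rw [hval]
      exact mul_ne_zero hxk (sub_ne_zero.2 hykl)
    · rw [Finset.forall_mem_insert]
      exact ⟨by simp [mul_comm], fun m hm => by simp [hxs m hm]⟩

variable [Finite κ]

theorem SeparatesCoordinates.exists_single_mem [DecidableEq κ] (hL : SeparatesCoordinates L)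
    (hmul : ∀ u ∈ L, ∀ v ∈ L, u * v ∈ L) (k : κ) : ∃ d ≠ 0, Pi.single k d ∈ L := by
  have := Fintype.ofFinite κ
  obtain ⟨x, hx, hxk, hx0⟩ :=
    hL.exists_vanishing_on hmul k (Finset.univ.erase k) (Finset.notMem_erase k _)
  have hsingle : x = Pi.single k (x k) := by
    ext l
    obtain rfl | hl := eq_or_ne l k
    · simp
    · simp [hl, hx0 l]
  exact ⟨x k, hxk, hsingle ▸ hx⟩

theorem SeparatesCoordinates.isTorsion_quotient (hL : SeparatesCoordinates L)
    (hmul : ∀ u ∈ L, ∀ v ∈ L, u * v ∈ L) : IsTorsion R ((κ → R) ⧸ L) := by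
  classical
  have := Fintype.ofFinite κ
  have hsingle (k : κ) (a : R) : L.mkQ (Pi.single k a) ∈ Submodule.torsion R ((κ → R) ⧸ L) := by
    obtain ⟨d, hd, hdL⟩ := hL.exists_single_mem hmul k
    refine (Submodule.mem_torsion_iff _).2 ⟨⟨d, mem_nonZeroDivisors_of_ne_zero hd⟩, ?_⟩
    have hcomm : d • Pi.single k a = a • (Pi.single k d : κ → R) := by
      simp [← Pi.single_smul, mul_comm]
    rw [Submonoid.mk_smul, ← map_smul, hcomm, Submodule.mkQ_apply, Submodule.Quotient.mk_eq_zero]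
    exact L.smul_mem a hdL
  intro z
  rw [← Submodule.mem_torsion_iff]
  obtain ⟨y, rfl⟩ := L.mkQ_surjective z
  rw [← Finset.univ_sum_single y, map_sum]
  exact Submodule.sum_mem _ fun k _ => hsingle k (y k)

theorem finrank_eq_card_of_isTorsion_quotient (h : IsTorsion R ((κ → R) ⧸ L)) :
    finrank R L = Nat.card κ := by
  have := Fintype.ofFinite κ
  have hsum := L.finrank_quotient_add_finrank
  rwa [finrank_eq_zero_iff_isTorsion.2 h, zero_add, finrank_pi, ← Nat.card_eq_fintype_card] at hsum

end FullRank

section SplitInjection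

variable {R M N : Type*} [CommRing R] [AddCommGroup M] [Module R M] [AddCommGroup N] [Module R N]
  {f : M →ₗ[R] N} {g : N →ₗ[R] M} {L : Submodule R N}

theorem finrank_comap_eq_of_injective (hf : Function.Injective f) (hL : L ≤ LinearMap.range f) :
    finrank R (L.comap f) = finrank R L := by
  rw [((L.comap f).equivMapOfInjective f hf).finrank_eq, Submodule.map_comap_eq_of_le hL]

theorem range_mkQ_comp_eq_torsion [IsTorsionFree R N] (hgf : Function.LeftInverse g f)
    (hL : L ≤ LinearMap.range f) (htors : IsTorsion R (M ⧸ L.comap f)) :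
    LinearMap.range (L.mkQ ∘ₗ f) = Submodule.torsion R (N ⧸ L) := by
  ext z
  rw [Submodule.mem_torsion_iff]
  constructor
  · rintro ⟨y, rfl⟩
    obtain ⟨a, ha⟩ := @htors ((L.comap f).mkQ y)
    have hay : a • y ∈ L.comap f := (Submodule.Quotient.mk_eq_zero _).1 ha
    refine ⟨a, (Submodule.Quotient.mk_eq_zero L).2 ?_⟩
    rwa [Submodule.mem_comap, LinearMap.map_smul_of_tower] at hay
  · rintro ⟨a, ha⟩
    obtain ⟨x, rfl⟩ := L.mkQ_surjective z
    have hax : (a : R) • x ∈ L := (Submodule.Quotient.mk_eq_zero L).1 ha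
    obtain ⟨y, hy⟩ := hL hax
    have hfg : (a : R) • f (g x) = (a : R) • x := by
      rw [← map_smul, ← map_smul, ← hy, hgf y]
    have hreg : IsRegular (a : R) := isRegular_iff_mem_nonZeroDivisors.2 a.2
    exact ⟨g x, congrArg L.mkQ (hreg.smul_right_injective N hfg)⟩

theorem card_torsion_quotient_eq_index [IsTorsionFree R N] (hgf : Function.LeftInverse g f)
    (hL : L ≤ LinearMap.range f) (htors : IsTorsion R (M ⧸ L.comap f)) :
    Nat.card (Submodule.torsion R (N ⧸ L)) = (L.comap f).toAddSubgroup.index := by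
  have hker : LinearMap.ker (L.mkQ ∘ₗ f) = L.comap f := by
    rw [LinearMap.ker_comp, Submodule.ker_mkQ]
  rw [← range_mkQ_comp_eq_torsion hgf hL htors, ← hker]
  exact (Nat.card_congr (L.mkQ ∘ₗ f).quotKerEquivRange.toEquiv).symm

end SplitInjection

section StructureTheorem

theorem exists_enumeration_nonzero_values {ι A : Type*} [Finite ι] [Zero A] (v : ι → A) :
    ∃ (n : ℕ) (c : ι → Option (Fin n)) (w : Fin n → A), Function.Injective w ∧ (∀ k, w k ≠ 0) ∧
      (∀ k, ∃ i, c i = some k) ∧ ∀ i, v i = (c i).elim 0 w := by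
  classical
  let e := Finite.equivFin ↥(Set.range v \ {0})
  let c (i : ι) : Option (Fin _) := if h : v i = 0 then none else some (e ⟨v i, ⟨i, rfl⟩, h⟩)
  refine ⟨_, c, fun k => e.symm k, Subtype.val_injective.comp e.symm.injective,
    fun k => (e.symm k).2.2, fun k => ?_, fun i => ?_⟩
  · obtain ⟨i, hi⟩ := (e.symm k).2.1
    have hi0 : v i ≠ 0 := hi ▸ (e.symm k).2.2
    refine ⟨i, ?_⟩
    simp only [c, dif_neg hi0, hi, Subtype.coe_eta, Equiv.apply_symm_apply]
  · by_cases h : v i = 0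
    · simp [c, h]
    · simp only [c, dif_neg h, Option.elim_some, Equiv.symm_apply_apply]

variable {ι R : Type*} [Finite ι] [CommRing R]

theorem exists_separatesCoordinates_comap_patternMap (L : Submodule R (ι → R)) :
    ∃ (n : ℕ) (c : ι → Option (Fin n)), (∀ k, ∃ i, c i = some k) ∧
      L ≤ LinearMap.range (patternMap R c) ∧ SeparatesCoordinates (L.comap (patternMap R c)) := by
  obtain ⟨n, c, w, hw, hw0, hc, hv⟩ :=
    exists_enumeration_nonzero_values fun i => (LinearMap.proj i : (ι → R) →ₗ[R] R).domRestrict L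
  have hpattern (x : L) : patternMap R c (fun k => w k x) = x := by
    ext i
    have hi : (x : ι → R) i = (c i).elim (0 : Dual R L) w x := LinearMap.congr_fun (hv i) x
    rw [hi, patternMap_apply]
    cases c i <;> rfl
  have hmem (x : L) : (fun k => w k x) ∈ L.comap (patternMap R c) := by
    rw [Submodule.mem_comap, hpattern]
    exact x.2
  refine ⟨n, c, hc, fun x hx => ⟨_, hpattern ⟨x, hx⟩⟩, fun k => ?_, fun k l hkl => ?_⟩
  · obtain ⟨x, hx⟩ := DFunLike.ne_iff.1 (hw0 k)
    exact ⟨_, hmem x, hx⟩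
  · obtain ⟨x, hx⟩ := DFunLike.ne_iff.1 (hw.ne hkl)
    exact ⟨_, hmem x, hx⟩

theorem exists_patternMap_of_mul_mem [IsDomain R] {L : Submodule R (ι → R)}
    (hmul : ∀ u ∈ L, ∀ v ∈ L, u * v ∈ L) {d : ℕ} (hrank : finrank R L = d) :
    ∃ c : ι → Option (Fin d), (∀ k, ∃ i, c i = some k) ∧ L ≤ LinearMap.range (patternMap R c) ∧
      IsTorsion R ((Fin d → R) ⧸ L.comap (patternMap R c)) := by
  obtain ⟨n, c, hc, hL, hsep⟩ := exists_separatesCoordinates_comap_patternMap L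
  choose r hr using hc
  have htors : IsTorsion R ((Fin n → R) ⧸ L.comap (patternMap R c)) :=
    hsep.isTorsion_quotient fun _ hy _ hz => mul_mem_comap_patternMap hmul c hy hz
  have hn : n = d := by
    rw [← hrank, ← finrank_comap_eq_of_injective (funLeft_leftInverse_patternMap hr).injective hL,
      finrank_eq_card_of_isTorsion_quotient htors, Nat.card_fin]
  subst hn
  exact ⟨c, fun k => ⟨r k, hr k⟩, hL, htors⟩

end StructureTheorem

section BasicMaps

/-- The coordinate pattern of `basicMap j`. -/
def basicPattern : Fin 4 → Fin 4 → Option (Fin 2)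
  | 0 => ![some 0, some 1, none, none]
  | 1 => ![some 0, some 1, some 1, none]
  | 2 => ![some 0, some 1, some 1, some 1]
  | 3 => ![some 0, some 0, some 1, some 1]

theorem basicMap_eq_patternMap (j : Fin 4) (x : Fin 2 → ℤ) :
    basicMap j x = patternMap ℤ (basicPattern j) x := by
  ext k
  rw [patternMap_apply]
  fin_cases j <;> fin_cases k <;> rfl

theorem perm_comp_basicMap_comp_perm (σ : Equiv.Perm (Fin 2)) (τ : Equiv.Perm (Fin 4))
    (j : Fin 4) :
    ((fun w : Fin 4 → ℤ => fun i => w (τ i)) ∘ basicMap j ∘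
        fun x : Fin 2 → ℤ => fun i => x (σ i)) =
      patternMap ℤ fun k => (basicPattern j (τ k)).map σ := by
  ext x k
  simp only [Function.comp_apply, basicMap_eq_patternMap, patternMap_apply]
  cases basicPattern j (τ k) <;> rfl

theorem exists_equiv_comp_eq_of_card_fiber_eq {α β γ : Type*} [Fintype α] [Fintype β]
    [DecidableEq γ] {f : α → γ} {g : β → γ}
    (h : ∀ c, Fintype.card {b // g b = c} = Fintype.card {a // f a = c}) :
    ∃ τ : α ≃ β, g ∘ τ = f := by
  have e (c : γ) : {a // f a = c} ≃ {b // g b = c} := Fintype.equivOfCardEq (h c).symm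
  exact ⟨Equiv.ofFiberEquiv e, funext (Equiv.ofFiberEquiv_map e)⟩

theorem exists_basicPattern_card_fiber_eq {n : Option (Fin 2) → ℕ} (h0 : 0 < n (some 0))
    (h1 : 0 < n (some 1)) (hsum : ∑ o, n o = 4) :
    ∃ (j : Fin 4) (σ : Equiv.Perm (Fin 2)),
      ∀ o, Fintype.card {k // (basicPattern j k).map σ = o} = n o := by
  rw [Fintype.sum_option, Fin.sum_univ_two] at hsum
  have hsizes : n none = 2 ∧ n (some 0) = 1 ∧ n (some 1) = 1 ∨
      n none = 1 ∧ n (some 0) = 1 ∧ n (some 1) = 2 ∨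
      n none = 1 ∧ n (some 0) = 2 ∧ n (some 1) = 1 ∨
      n none = 0 ∧ n (some 0) = 1 ∧ n (some 1) = 3 ∨
      n none = 0 ∧ n (some 0) = 3 ∧ n (some 1) = 1 ∨
      n none = 0 ∧ n (some 0) = 2 ∧ n (some 1) = 2 := by
    omega
  simp only [Option.forall, Fin.forall_fin_two]
  rcases hsizes with h | h | h | h | h | h <;> rw [h.1, h.2.1, h.2.2]
  · exact ⟨0, 1, by decide⟩
  · exact ⟨1, 1, by decide⟩
  · exact ⟨1, Equiv.swap 0 1, by decide⟩
  · exact ⟨2, 1, by decide⟩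
  · exact ⟨2, Equiv.swap 0 1, by decide⟩
  · exact ⟨3, 1, by decide⟩

theorem exists_eq_map_basicPattern_comp_perm {c : Fin 4 → Option (Fin 2)}
    (hc : ∀ k, ∃ i, c i = some k) :
    ∃ (j : Fin 4) (σ : Equiv.Perm (Fin 2)) (τ : Equiv.Perm (Fin 4)),
      c = fun k => (basicPattern j (τ k)).map σ := by
  have hpos (k : Fin 2) : 0 < Fintype.card {i // c i = some k} :=
    let ⟨i, hi⟩ := hc k
    Fintype.card_pos_iff.2 ⟨i, hi⟩
  have hsum : ∑ o, Fintype.card {i // c i = o} = 4 := by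
    rw [← Fintype.card_sigma, Fintype.card_congr (Equiv.sigmaFiberEquiv c), Fintype.card_fin]
  obtain ⟨j, σ, hcard⟩ := exists_basicPattern_card_fiber_eq (hpos 0) (hpos 1) hsum
  obtain ⟨τ, hτ⟩ := exists_equiv_comp_eq_of_card_fiber_eq hcard
  exact ⟨j, σ, τ, hτ.symm⟩

end BasicMaps

/-- Every multiplicative sublattice of co-rank `2` in `ℤ⁴` is the image of a full rank
multiplicative sublattice `L'` of `ℤ²` under a map of the form `τ ∘ f_j ∘ σ` with
`σ ∈ S₂`, `τ ∈ S₄` acting by permuting coordinates, and the torsion subgroup of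
`ℤ⁴/L` has cardinality `[ℤ² : L']`. -/
theorem corank_two_in_Z4 (L : Submodule ℤ (Fin 4 → ℤ)) (hmul : IsMulClosed L)
    (hrank : Module.finrank ℤ L = 2) :
    ∃ L' : Submodule ℤ (Fin 2 → ℤ), IsMulClosed L' ∧ Module.finrank ℤ L' = 2 ∧
      ∃ (σ : Equiv.Perm (Fin 2)) (τ : Equiv.Perm (Fin 4)) (j : Fin 4),
        (L : Set (Fin 4 → ℤ)) =
          ((fun w : Fin 4 → ℤ => fun i => w (τ i)) ∘ basicMap j ∘
              fun x : Fin 2 → ℤ => fun i => x (σ i)) '' (L' : Set (Fin 2 → ℤ)) ∧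
        Nat.card (Submodule.torsion ℤ ((Fin 4 → ℤ) ⧸ L)) = L'.toAddSubgroup.index := by
  obtain ⟨c, hc, hL, htors⟩ := exists_patternMap_of_mul_mem hmul hrank
  choose r hr using hc
  obtain ⟨j, σ, τ, hστ⟩ := exists_eq_map_basicPattern_comp_perm fun k => ⟨r k, hr k⟩
  have hinv := funLeft_leftInverse_patternMap (R := ℤ) hr
  refine ⟨L.comap (patternMap ℤ c), fun _ hy _ hz => mul_mem_comap_patternMap hmul c hy hz,
    (finrank_comap_eq_of_injective hinv.injective hL).trans hrank, σ, τ, j, ?_,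
    card_torsion_quotient_eq_index hinv hL htors⟩
  rw [perm_comp_basicMap_comp_perm, ← hστ, ← Submodule.map_coe, Submodule.map_comap_eq_of_le hL]
end
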